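/- The XYZ theorem (Miller–Yu): Let X, Y, Z ∈ 2^ω. If X is Martin-Löf random, X ≤_T Y, and Y is Martin-Löf random relative to Z, then X is Martin-Löf random relative to Z. -/

import Mathlib

open scoped ENNReal NNReal Classical

namespace AR

/-- Elements of Cantor space `2^ω`: infinite binary sequences. -/
abbrev Seq := ℕ → Bool

/-- Finite binary strings `2^{<ω}`. -/
abbrev Str := List Bool

/-- The first `n` bits of a sequence `A`, as a finite string (`A↾n`). -/
def pre (A : Seq) (n : ℕ) : Str := List.ofFn fun i : Fin n => A i

/-- The basic clopen cylinder `[σ]` of all sequences extending `σ`. -/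
def cyl (σ : Str) : Set Seq := {A | pre A σ.length = σ}

/-- A measure on Cantor space is *fair-coin* if every cylinder `[σ]` has measure
`2^{-|σ|}`; this uniquely characterizes the usual product measure `μ` on `2^ω`. -/
def FairCoin (μ : MeasureTheory.Measure Seq) : Prop :=
  ∀ σ : Str, μ (cyl σ) = (2 : ℝ≥0∞)⁻¹ ^ σ.length

/-- A machine is a partial computable function `2^{<ω} ⇀ 2^{<ω}`. -/
def IsMachine (M : Str →. Str) : Prop := Partrec M

/-- Kolmogorov complexity of `τ` relative to the machine `M`:
`C_M(τ) = min{|σ| : M(σ)↓ = τ}`, with value `∞` if no such `σ` exists. -/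
noncomputable def Cplx (M : Str →. Str) (τ : Str) : ℕ∞ :=
  sInf ((fun σ : Str => (σ.length : ℕ∞)) '' {σ | τ ∈ M σ})

/-- A universal machine: a machine simulating every machine up to an additive
constant.  `Cplx U` for universal `U` is plain Kolmogorov complexity `C`. -/
def UniversalMachine (U : Str →. Str) : Prop :=
  IsMachine U ∧ ∀ M : Str →. Str, IsMachine M → ∃ c : ℕ, ∀ τ, Cplx U τ ≤ Cplx M τ + c

/-- A set of strings is prefix-free if none of its elements is a proper initial
segment of another. -/
def PrefixFree (S : Set Str) : Prop :=
  ∀ σ ∈ S, ∀ τ ∈ S, σ <+: τ → σ = τ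

/-- A prefix-free machine: a machine whose domain is prefix-free. -/
def PrefixFreeMachine (M : Str →. Str) : Prop :=
  IsMachine M ∧ PrefixFree {σ | (M σ).Dom}

/-- A universal prefix-free machine.  `Cplx U` for such `U` is prefix-free
Kolmogorov complexity `K`. -/
def UniversalPFMachine (U : Str →. Str) : Prop :=
  PrefixFreeMachine U ∧
    ∀ M : Str →. Str, PrefixFreeMachine M → ∃ c : ℕ, ∀ τ, Cplx U τ ≤ Cplx M τ + c

/-- A c.e. (recursively enumerable) predicate. -/
def CEPred {α} [Primcodable α] (p : α → Prop) : Prop :=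
  Partrec fun a => Part.assert (p a) fun _ => Part.some ()

/-- A Martin-Löf test: a sequence of uniformly Σ⁰₁ classes `U i`, given by a single
c.e. set `W` of pairs, with `μ (U i) ≤ 2^{-i}`. -/
def MLTest (μ : MeasureTheory.Measure Seq) (U : ℕ → Set Seq) : Prop :=
  ∃ W : Set (ℕ × Str), CEPred (· ∈ W) ∧
    (∀ i, U i = ⋃ σ ∈ {σ : Str | (i, σ) ∈ W}, cyl σ) ∧
    ∀ i, μ (U i) ≤ (2 : ℝ≥0∞)⁻¹ ^ i

/-- `A` is Martin-Löf random if it passes every Martin-Löf test. -/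
def MLRandom (μ : MeasureTheory.Measure Seq) (A : Seq) : Prop :=
  ∀ U : ℕ → Set Seq, MLTest μ U → A ∉ ⋂ i, U i

/-- Oracle partial recursion: `RecIn O f` means that the partial function
`f : ℕ ⇀ ℕ` is partial recursive relative to the oracle `O`
(Mathlib's `Nat.RecursiveIn`). -/
inductive RecIn (O : ℕ →. ℕ) : (ℕ →. ℕ) → Prop
  | zero : RecIn O (pure 0)
  | succ : RecIn O Nat.succ
  | left : RecIn O ↑fun n : ℕ => n.unpair.1
  | right : RecIn O ↑fun n : ℕ => n.unpair.2
  | oracle : RecIn O O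
  | pair {f g} : RecIn O f → RecIn O g → RecIn O fun n => Nat.pair <$> f n <*> g n
  | comp {f g} : RecIn O f → RecIn O g → RecIn O fun n => g n >>= f
  | prec {f g} : RecIn O f → RecIn O g → RecIn O (Nat.unpaired fun a n =>
      n.rec (f a) fun y IH => do let i ← IH; g (Nat.pair a (Nat.pair y i)))
  | rfind {f} : RecIn O f →
      RecIn O fun a => Nat.rfind fun n => (fun m => m = 0) <$> f (Nat.pair a n)

/-- The characteristic-function oracle associated to a sequence `A ∈ 2^ω`. -/
def oracleOf (A : Seq) : ℕ →. ℕ := fun n => Part.some (cond (A n) 1 0)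

/-- The characteristic-function oracle associated to a set of naturals. -/
noncomputable def oracleOfSet (S : Set ℕ) : ℕ →. ℕ :=
  fun n => Part.some (if n ∈ S then 1 else 0)

/-- Relative partial computability for partial functions between coded types. -/
def PartrecIn (O : ℕ →. ℕ) {α σ} [Primcodable α] [Primcodable σ] (f : α →. σ) : Prop :=
  RecIn O fun n =>
    Part.bind (Encodable.decode (α := α) n) fun a => (f a).map Encodable.encode

/-- A predicate is c.e. relative to the oracle `O`. -/
def CEPredIn (O : ℕ →. ℕ) {α} [Primcodable α] (p : α → Prop) : Prop :=
  PartrecIn O fun a => Part.assert (p a) fun _ => Part.some ()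

/-- Turing reducibility between oracles: `f` is recursive in `g`. -/
def TuringLE (f g : ℕ →. ℕ) : Prop := RecIn g f

/-- Turing reducibility `B ≤_T A` between sequences. -/
def SeqTuringLE (B A : Seq) : Prop := TuringLE (oracleOf B) (oracleOf A)

/-- The `e`-th partial computable function `φ_e`, via Mathlib's standard
enumeration of codes for the partial recursive functions. -/
def phi (e : ℕ) : ℕ →. ℕ := (Denumerable.ofNat Nat.Partrec.Code e).eval

/-- The halting problem `∅' = {e : φ_e(e)↓}`. -/
def haltingSet : Set ℕ := {e | (phi e e).Dom}

/-- A Martin-Löf test relative to the oracle `O`. -/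
def MLTestIn (O : ℕ →. ℕ) (μ : MeasureTheory.Measure Seq) (U : ℕ → Set Seq) : Prop :=
  ∃ W : Set (ℕ × Str), CEPredIn O (· ∈ W) ∧
    (∀ i, U i = ⋃ σ ∈ {σ : Str | (i, σ) ∈ W}, cyl σ) ∧
    ∀ i, μ (U i) ≤ (2 : ℝ≥0∞)⁻¹ ^ i

/-- Martin-Löf randomness relative to the oracle `O`. -/
def MLRandomIn (O : ℕ →. ℕ) (μ : MeasureTheory.Measure Seq) (A : Seq) : Prop :=
  ∀ U : ℕ → Set Seq, MLTestIn O μ U → A ∉ ⋂ i, U i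

/-!
Let `Φ` be a Turing functional with `Φ^Y = X`. The cylinders `[σ]` whose preimage under `Φ` has
measure more than `2^{c-|σ|}` have total measure at most `2^{-c}`, because the preimages of
incompatible strings are disjoint. As `c` varies they form a Martin-Löf test, so the random `X`
avoids them for some `c`. Given a test relative to `Z`, enumerate for each cylinder of its
`(i+c)`-th class the preimage of that cylinder only for as long as the measure of the preimage
stays below this bound. The pulled back classes have measure at most `2^c 2^{-(i+c)} = 2^{-i}`, so
they form a test relative to `Z`, and if `X` fails the original test then `Y` fails the new one.
Overlapping cylinders are harmless because the cutoff is applied to all initial segments of `σ` as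
well: passing to the minimal strings of a set then loses nothing.
-/

open Filter MeasureTheory

theorem pre_length (A : Seq) (n : ℕ) : (pre A n).length = n := by simp [pre]

theorem pre_succ (A : Seq) (n : ℕ) : pre A (n + 1) = pre A n ++ [A n] := by
  rw [pre, List.ofFn_succ_last]
  rfl

theorem pre_prefix_pre (A : Seq) {m n : ℕ} (h : m ≤ n) : pre A m <+: pre A n := by
  induction n, h using Nat.le_induction with
  | base => exact List.prefix_rfl
  | succ n _ ih => exact ih.trans (pre_succ A n ▸ List.prefix_append _ _)

theorem take_pre (A : Seq) (m n : ℕ) : (pre A n).take m = pre A (min m n) := by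
  have h := List.prefix_iff_eq_take.1 (pre_prefix_pre A (min_le_right m n))
  rw [h, pre_length, List.take_eq_take_min, pre_length]

theorem getElem?_pre_eq_some_iff {A : Seq} {i n : ℕ} {b : Bool} :
    (pre A n)[i]? = some b ↔ i < n ∧ A i = b := by
  simp [pre, List.getElem?_ofFn]

theorem mem_cyl_iff_prefix {A : Seq} {σ : Str} : A ∈ cyl σ ↔ ∃ n, σ <+: pre A n := by
  refine ⟨fun h => ⟨σ.length, ?_⟩, fun ⟨n, h⟩ => ?_⟩
  · rw [show pre A σ.length = σ from h]
  · have hn : σ.length ≤ n := pre_length A n ▸ h.length_le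
    exact ((List.prefix_iff_eq_take.1 h).trans (by rw [take_pre, min_eq_left hn])).symm

/-! ### Primitive recursive searches -/

theorem primrecPred_exists_mem_option {α β : Type*} [Primcodable α] [Primcodable β]
    {R : α → β → Prop} (hR : PrimrecRel R) {f : α → Option β} (hf : Primrec f) :
    PrimrecPred fun a => ∃ b ∈ f a, R a b := by
  have : Primrec fun a => (f a).elim false fun b => decide (R a b) :=
    (Primrec.option_casesOn hf (Primrec.const false) hR.decide).of_eq fun a => by cases f a <;> rfl
  refine (Primrec.eq.comp this (Primrec.const true)).of_eq fun a => ?_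
  cases f a <;> simp

theorem primrecRel_forall_lt {α : Type*} [Primcodable α] {R : ℕ → α → Prop} (hR : PrimrecRel R) :
    PrimrecRel fun n a => ∀ m < n, R m a :=
  (hR.forall_mem_list.comp (Primrec.list_range.comp Primrec.fst) Primrec.snd).of_eq (by simp)

theorem primrec_find?_range {α : Type*} [Primcodable α] {R : ℕ → α → Prop} (hR : PrimrecRel R) :
    Primrec₂ fun (n : ℕ) (a : α) => (List.range n).find? (R · a) :=
  (Primrec.list_head?.comp (hR.listFilter.comp (Primrec.list_range.comp Primrec.fst)
    Primrec.snd)).of_eq fun _ => List.head?_filter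

/-- The unbounded search for a zero of `g` succeeds with result `m`. -/
def IsLeastZero (g : ℕ → Option ℕ) (m : ℕ) : Prop :=
  0 ∈ g m ∧ ∀ j < m, ∃ x ∈ g j, x ≠ 0

theorem IsLeastZero.le {g : ℕ → Option ℕ} {m n : ℕ} (hm : IsLeastZero g m)
    (hn : IsLeastZero g n) : m ≤ n := by
  refine not_lt.1 fun h => ?_
  obtain ⟨x, hx, hx0⟩ := hm.2 n h
  exact hx0 (Option.mem_unique hx hn.1)

theorem IsLeastZero.mono {g g' : ℕ → Option ℕ} (h : ∀ {n x}, x ∈ g n → x ∈ g' n) {m : ℕ}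
    (hm : IsLeastZero g m) : IsLeastZero g' m :=
  ⟨h hm.1, fun j hj => (hm.2 j hj).imp fun _ hx => ⟨h hx.1, hx.2⟩⟩

theorem mem_find?_isLeastZero {g : ℕ → Option ℕ} {s m : ℕ} :
    m ∈ (List.range s).find? (IsLeastZero g ·) ↔ m < s ∧ IsLeastZero g m := by
  simp only [Option.mem_def, List.find?_range_eq_some, decide_eq_true_eq, List.mem_range,
    Bool.not_eq_true', decide_eq_false_iff_not]
  exact ⟨fun h => ⟨h.2.1, h.1⟩, fun h => ⟨h.2, h.1, fun j hj hjp => hj.not_ge (h.2.le hjp)⟩⟩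

theorem mem_rfind_eq_zero {f : ℕ →. ℕ} {m : ℕ} :
    m ∈ Nat.rfind (fun n => (fun x => decide (x = 0)) <$> f n) ↔
      0 ∈ f m ∧ ∀ j < m, ∃ x ∈ f j, x ≠ 0 := by
  refine Nat.mem_rfind.trans ?_
  simp

/-! ### The use principle -/

/-- `G` is a primitive recursive approximation to the partial function `f` using finite pieces of
the oracle `A`. The length of `ρ` plays two roles: it is the use of the computation `G ρ n`, and it
bounds the unbounded searches in it, which is what keeps `G` primitive recursive. -/
structure Approximates (G : Str → ℕ → Option ℕ) (A : Seq) (f : ℕ →. ℕ) : Prop where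
  primrec : Primrec₂ G
  mono : ∀ {ρ ρ' : Str}, ρ <+: ρ' → ∀ {n m : ℕ}, m ∈ G ρ n → m ∈ G ρ' n
  mem_iff : ∀ {n m : ℕ}, m ∈ f n ↔ ∃ k, m ∈ G (pre A k) n

namespace Approximates

variable {A : Seq} {f g : ℕ →. ℕ} {F G : Str → ℕ → Option ℕ}

theorem of_mem (hG : Approximates G A f) {k n m : ℕ} (h : m ∈ G (pre A k) n) : m ∈ f n :=
  hG.mem_iff.2 ⟨k, h⟩

theorem eventually_mem (hG : Approximates G A f) {n m : ℕ} (h : m ∈ f n) :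
    ∀ᶠ k in atTop, m ∈ G (pre A k) n := by
  obtain ⟨k, hk⟩ := hG.mem_iff.1 h
  filter_upwards [eventually_ge_atTop k] with l hl
  exact hG.mono (pre_prefix_pre A hl) hk

theorem of_primrec (A : Seq) {f : ℕ → ℕ} (hf : Primrec f) :
    Approximates (fun _ n => some (f n)) A f where
  primrec := Primrec.option_some.comp (hf.comp Primrec.snd)
  mono _ _ _ h := h
  mem_iff := by simp [eq_comm]

theorem oracle (A : Seq) :
    Approximates (fun ρ n => ρ[n]?.map fun b => cond b 1 0) A (oracleOf A) where
  primrec := Primrec.option_map Primrec.list_getElem?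
    (Primrec.cond Primrec.snd (Primrec.const 1) (Primrec.const 0))
  mono h n m := by
    simp only [Option.mem_def, Option.map_eq_some_iff]
    rintro ⟨b, hb, rfl⟩
    obtain ⟨hn, -⟩ := List.getElem?_eq_some_iff.1 hb
    exact ⟨b, List.prefix_iff_getElem?.1 h n hn ▸ hb ▸ (List.getElem?_eq_getElem hn).symm, rfl⟩
  mem_iff {n m} := by
    simp only [oracleOf, Part.mem_some_iff, Option.mem_def, Option.map_eq_some_iff,
      getElem?_pre_eq_some_iff]
    constructor
    · rintro rfl
      exact ⟨n + 1, A n, ⟨n.lt_succ_self, rfl⟩, rfl⟩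
    · rintro ⟨k, b, ⟨-, rfl⟩, rfl⟩
      rfl

theorem pair (hF : Approximates F A f) (hG : Approximates G A g) :
    Approximates (fun ρ n => (F ρ n).bind fun x => (G ρ n).map (Nat.pair x)) A
      (fun n => Nat.pair <$> f n <*> g n) where
  primrec := Primrec.option_bind hF.primrec (Primrec.option_map
    (hG.primrec.comp (Primrec.fst.comp Primrec.fst) (Primrec.snd.comp Primrec.fst))
    (Primrec₂.natPair.comp (Primrec.snd.comp Primrec.fst) Primrec.snd))
  mono h n m := by
    simp only [Option.mem_def, Option.bind_eq_some_iff, Option.map_eq_some_iff]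
    rintro ⟨x, hx, y, hy, rfl⟩
    exact ⟨x, hF.mono h hx, y, hG.mono h hy, rfl⟩
  mem_iff {n m} := by
    simp only [Seq.seq, Part.mem_bind_iff, Part.map_eq_map, Part.mem_map_iff, Option.mem_def,
      Option.bind_eq_some_iff, Option.map_eq_some_iff, exists_exists_and_eq_and]
    constructor
    · rintro ⟨x, hx, y, hy, rfl⟩
      obtain ⟨k, hxk, hyk⟩ := ((hF.eventually_mem hx).and (hG.eventually_mem hy)).exists
      exact ⟨k, x, hxk, y, hyk, rfl⟩
    · rintro ⟨k, x, hx, y, hy, rfl⟩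
      exact ⟨x, hF.of_mem hx, y, hG.of_mem hy, rfl⟩

theorem comp (hF : Approximates F A f) (hG : Approximates G A g) :
    Approximates (fun ρ n => (G ρ n).bind (F ρ)) A (fun n => g n >>= f) where
  primrec := Primrec.option_bind hG.primrec
    (hF.primrec.comp (Primrec.fst.comp Primrec.fst) Primrec.snd)
  mono h n m := by
    simp only [Option.mem_def, Option.bind_eq_some_iff]
    rintro ⟨x, hx, hm⟩
    exact ⟨x, hG.mono h hx, hF.mono h hm⟩
  mem_iff {n m} := by
    refine Part.mem_bind_iff.trans ?_
    simp only [Option.mem_def, Option.bind_eq_some_iff]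
    constructor
    · rintro ⟨x, hx, hm⟩
      exact ((hG.eventually_mem hx).and (hF.eventually_mem hm)).exists.imp fun k hk => ⟨x, hk⟩
    · rintro ⟨k, x, hx, hm⟩
      exact ⟨x, hG.of_mem hx, hF.of_mem hm⟩

theorem prec (hF : Approximates F A f) (hG : Approximates G A g) :
    Approximates (fun ρ => Nat.unpaired fun a n =>
        n.rec (F ρ a) fun y IH => IH.bind fun i => G ρ (Nat.pair a (Nat.pair y i))) A
      (Nat.unpaired fun a n =>
        n.rec (f a) fun y IH => do let i ← IH; g (Nat.pair a (Nat.pair y i))) where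
  primrec := by
    have hl : Primrec fun p : Str × ℕ => p.2.unpair.1 :=
      Primrec.fst.comp (Primrec.unpair.comp Primrec.snd)
    have hr : Primrec fun p : Str × ℕ => p.2.unpair.2 :=
      Primrec.snd.comp (Primrec.unpair.comp Primrec.snd)
    have hstep : Primrec₂ fun (p : Str × ℕ) (q : ℕ × Option ℕ) =>
        q.2.bind fun i => G p.1 (Nat.pair p.2.unpair.1 (Nat.pair q.1 i)) :=
      Primrec.option_bind (Primrec.snd.comp Primrec.snd)
        (hG.primrec.comp (Primrec.fst.comp (Primrec.fst.comp Primrec.fst))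
          (Primrec₂.natPair.comp (hl.comp (Primrec.fst.comp Primrec.fst))
            (Primrec₂.natPair.comp (Primrec.fst.comp (Primrec.snd.comp Primrec.fst)) Primrec.snd)))
    exact Primrec.nat_rec' hr (hF.primrec.comp Primrec.fst hl) hstep
  mono {ρ ρ'} h p m := by
    simp only [Nat.unpaired]
    induction p.unpair.2 generalizing m with
    | zero => exact hF.mono h
    | succ n ih =>
      simp only [Option.mem_def, Option.bind_eq_some_iff]
      rintro ⟨i, hi, hm⟩
      exact ⟨i, ih i hi, hG.mono h hm⟩
  mem_iff {p m} := by
    simp only [Nat.unpaired]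
    generalize p.unpair.1 = a, p.unpair.2 = n
    constructor
    · intro hm
      refine Eventually.exists (f := atTop) ?_
      induction n generalizing m with
      | zero => exact hF.eventually_mem hm
      | succ n ih =>
        obtain ⟨i, hi, hm⟩ := Part.mem_bind_iff.1 hm
        filter_upwards [ih hi, hG.eventually_mem hm] with k hik hmk
        exact Option.mem_bind_iff.2 ⟨i, hik, hmk⟩
    · rintro ⟨k, hm⟩
      induction n generalizing m with
      | zero => exact hF.of_mem hm
      | succ n ih =>
        obtain ⟨i, hi, hm⟩ := Option.mem_bind_iff.1 hm
        exact Part.mem_bind_iff.2 ⟨i, ih hi, hG.of_mem hm⟩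

theorem rfind (hF : Approximates F A f) :
    Approximates
      (fun ρ a => (List.range ρ.length).find? (IsLeastZero (fun n => F ρ (Nat.pair a n)) ·)) A
      (fun a => Nat.rfind fun n => (fun m => m = 0) <$> f (Nat.pair a n)) where
  primrec := by
    have hF' : Primrec₂ fun (n : ℕ) (p : Str × ℕ) => F p.1 (Nat.pair p.2 n) :=
      hF.primrec.comp (Primrec.fst.comp Primrec.snd)
        (Primrec₂.natPair.comp (Primrec.snd.comp Primrec.snd) Primrec.fst)
    have hzero : PrimrecRel fun (n : ℕ) (p : Str × ℕ) => 0 ∈ F p.1 (Nat.pair p.2 n) :=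
      Primrec.eq.comp hF' (Primrec.const (some 0))
    have hne : PrimrecRel fun (n : ℕ) (p : Str × ℕ) => ∃ x ∈ F p.1 (Nat.pair p.2 n), x ≠ 0 :=
      primrecPred_exists_mem_option (R := fun _ x => x ≠ 0)
        (Primrec.eq.comp Primrec.snd (Primrec.const 0)).not hF'
    have hleast : PrimrecRel fun (m : ℕ) (p : Str × ℕ) =>
        IsLeastZero (fun n => F p.1 (Nat.pair p.2 n)) m :=
      hzero.and (primrecRel_forall_lt hne)
    exact (primrec_find?_range hleast).comp
      (Primrec.list_length.comp Primrec.fst) Primrec.id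
  mono h a m := by
    simp only [mem_find?_isLeastZero]
    exact fun hm => ⟨hm.1.trans_le h.length_le, hm.2.mono (hF.mono h)⟩
  mem_iff {a m} := by
    refine mem_rfind_eq_zero.trans ?_
    simp only [mem_find?_isLeastZero, pre_length]
    constructor
    · rintro ⟨h0, hm⟩
      have hne : ∀ᶠ k in atTop, ∀ j ∈ Set.Iio m, ∃ x ∈ F (pre A k) (Nat.pair a j), x ≠ 0 := by
        refine (eventually_all_finite (Set.finite_Iio m)).2 fun j hj => ?_
        obtain ⟨x, hx, hx0⟩ := hm j hj
        filter_upwards [hF.eventually_mem hx] with k hk using ⟨x, hk, hx0⟩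
      exact ((eventually_gt_atTop m).and ((hF.eventually_mem h0).and hne)).exists
    · rintro ⟨k, -, h0, hm⟩
      exact ⟨hF.of_mem h0, fun j hj => (hm j hj).imp fun x hx => ⟨hF.of_mem hx.1, hx.2⟩⟩

end Approximates

theorem RecIn.exists_approximates {A : Seq} {f : ℕ →. ℕ} (hf : RecIn (oracleOf A) f) :
    ∃ G, Approximates G A f := by
  induction hf with
  | zero => exact ⟨_, .of_primrec A (Primrec.const 0)⟩
  | succ => exact ⟨_, .of_primrec A Primrec.succ⟩
  | left => exact ⟨_, .of_primrec A (Primrec.fst.comp Primrec.unpair)⟩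
  | right => exact ⟨_, .of_primrec A (Primrec.snd.comp Primrec.unpair)⟩
  | oracle => exact ⟨_, .oracle A⟩
  | pair _ _ ihf ihg => exact ⟨_, ihf.choose_spec.pair ihg.choose_spec⟩
  | comp _ _ ihf ihg => exact ⟨_, ihf.choose_spec.comp ihg.choose_spec⟩
  | prec _ _ ihf ihg => exact ⟨_, ihf.choose_spec.prec ihg.choose_spec⟩
  | rfind _ ih => exact ⟨_, ih.choose_spec.rfind⟩

/-! ### Relative computable enumerability -/

theorem rfind_some_dom {b : ℕ → Bool} :
    (Nat.rfind fun n => Part.some (b n)).Dom ↔ ∃ n, b n = true :=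
  Nat.rfind_dom.trans (by
    simp only [Part.mem_some_iff, Part.some_dom, implies_true, and_true, eq_comm])

section RecIn

variable {O : ℕ →. ℕ}

theorem RecIn.of_eq {f g : ℕ →. ℕ} (hf : RecIn O f) (h : ∀ n, f n = g n) : RecIn O g :=
  (funext h : f = g) ▸ hf

theorem RecIn.of_partrec {f : ℕ →. ℕ} (hf : Nat.Partrec f) : RecIn O f := by
  induction hf with
  | zero => exact .zero
  | succ => exact .succ
  | left => exact .left
  | right => exact .right
  | pair _ _ ihf ihg => exact .pair ihf ihg
  | comp _ _ ihf ihg => exact .comp ihf ihg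
  | prec _ _ ihf ihg => exact .prec ihf ihg
  | rfind _ ihf => exact .rfind ihf

theorem RecIn.of_primrec {f : ℕ → ℕ} (hf : Primrec f) : RecIn O (fun n => Part.some (f n)) :=
  .of_partrec (Nat.Partrec.of_primrec (Primrec.nat_iff.1 hf))

theorem RecIn.pair_some {f g : ℕ → ℕ} (hf : RecIn O fun n => Part.some (f n))
    (hg : RecIn O fun n => Part.some (g n)) :
    RecIn O fun n => Part.some (Nat.pair (f n) (g n)) := by
  refine (hf.pair hg).of_eq fun n => ?_
  simp [Seq.seq]

theorem RecIn.comp_some {f g : ℕ → ℕ} (hf : RecIn O fun n => Part.some (f n))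
    (hg : RecIn O fun n => Part.some (g n)) : RecIn O fun n => Part.some (f (g n)) := by
  refine (hf.comp hg).of_eq fun n => ?_
  simp

theorem RecIn.assert_exists_eq_zero {t : ℕ → ℕ} (ht : RecIn O fun n => Part.some (t n)) :
    RecIn O fun n => Part.assert (∃ k, t (Nat.pair n k) = 0) fun _ => Part.some 0 := by
  refine ((RecIn.of_primrec (Primrec.const 0)).comp ht.rfind).of_eq fun n => ?_
  refine Part.ext' ?_ fun _ _ => rfl
  simpa [Part.assert] using rfind_some_dom (b := fun k => decide (t (Nat.pair n k) = 0))

open Encodable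

theorem recIn_encode_pre (A : Seq) :
    RecIn (oracleOf A) fun k => Part.some (encode (pre A k)) := by
  let app (i : ℕ) : ℕ := encode ((decode (α := Str) i.unpair.1).getD [] ++ [i.unpair.2 == 1])
  have happ : Primrec app := by
    refine Primrec.encode.comp (Primrec.list_append.comp (Primrec.option_getD.comp
      (Primrec.decode.comp (Primrec.fst.comp Primrec.unpair)) (Primrec.const [])) ?_)
    exact Primrec.list_cons.comp (Primrec.beq.comp (Primrec.snd.comp Primrec.unpair)
      (Primrec.const 1)) (Primrec.const [])
  have hy : Primrec fun n : ℕ => n.unpair.2.unpair.1 :=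
    Primrec.fst.comp (Primrec.unpair.comp (Primrec.snd.comp Primrec.unpair))
  have hi : Primrec fun n : ℕ => n.unpair.2.unpair.2 :=
    Primrec.snd.comp (Primrec.unpair.comp (Primrec.snd.comp Primrec.unpair))
  have hO : RecIn (oracleOf A) fun n => Part.some (cond (A n) 1 0) := .oracle
  have hstep := RecIn.comp_some (.of_primrec happ)
    (RecIn.pair_some (.of_primrec hi) (RecIn.comp_some hO (.of_primrec hy)))
  have hrec := (RecIn.of_primrec (Primrec.const (encode ([] : Str)))).prec hstep
  have hpair : RecIn (oracleOf A) fun n => Part.some (Nat.pair 0 n) :=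
    .of_primrec (Primrec₂.natPair.comp (Primrec.const 0) Primrec.id)
  refine (hrec.comp hpair).of_eq fun k => ?_
  simp only [Part.bind_eq_bind, Part.bind_some, Nat.unpaired, Nat.unpair_pair]
  induction k with
  | zero => rfl
  | succ k ih =>
    simp only [ih, Part.bind_some]
    simp only [Nat.unpair_pair, app, encodek, Option.getD_some]
    rw [pre_succ]
    cases A k <;> rfl

theorem cePredIn_iff_recIn {α : Type*} [Primcodable α] {p : α → Prop} :
    CEPredIn O p ↔
      RecIn O fun n => Part.assert (∃ a ∈ decode (α := α) n, p a) fun _ => Part.some 0 := by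
  unfold CEPredIn PartrecIn
  refine iff_of_eq (congrArg _ (funext fun n => Part.ext' ?_ fun _ _ => rfl))
  cases decode (α := α) n <;> simp [Part.assert]

end RecIn

section CEPredIn

variable {α β : Type*} [Primcodable α] [Primcodable β] {A : Seq}

open Encodable in
theorem cePredIn_oracleOf_iff {p : α → Prop} :
    CEPredIn (oracleOf A) p ↔
      ∃ R : Str → α → Prop, PrimrecRel R ∧ ∀ a, p a ↔ ∃ k, R (pre A k) a := by
  rw [cePredIn_iff_recIn]
  constructor
  · intro h
    obtain ⟨G, hG⟩ := h.exists_approximates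
    refine ⟨fun ρ a => 0 ∈ G ρ (encode a), ?_, fun a => ?_⟩
    · exact Primrec.eq.comp (hG.primrec.comp Primrec.fst (Primrec.encode.comp Primrec.snd))
        (Primrec.const (some 0))
    · rw [← hG.mem_iff]
      simp [Part.mem_assert_iff]
  · rintro ⟨R, hR, hp⟩
    have hR' : PrimrecPred fun n : ℕ => ∃ q ∈ decode (α := α × Str) n, R q.2 q.1 :=
      primrecPred_exists_mem_option (R := fun _ (q : α × Str) => R q.2 q.1)
        (hR.comp (Primrec.snd.comp Primrec.snd) (Primrec.fst.comp Primrec.snd)) Primrec.decode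
    have hleft : RecIn (oracleOf A) fun n => Part.some n.unpair.1 := .left
    have ht := RecIn.comp_some
      (.of_primrec (Primrec.ite hR' (Primrec.const 0) (Primrec.const 1)))
      (hleft.pair_some ((recIn_encode_pre A).comp_some .right))
    refine ht.assert_exists_eq_zero.of_eq fun n => ?_
    refine Part.ext' ?_ fun _ _ => rfl
    cases h : decode (α := α) n <;> simp [Part.assert, decode_prod_val, h, hp]

theorem CEPredIn.comp {p : β → Prop} (hp : CEPredIn (oracleOf A) p) {f : α → β} (hf : Primrec f) :
    CEPredIn (oracleOf A) fun a => p (f a) := by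
  obtain ⟨R, hR, hp⟩ := cePredIn_oracleOf_iff.1 hp
  exact cePredIn_oracleOf_iff.2
    ⟨fun ζ a => R ζ (f a), hR.comp Primrec.fst (hf.comp Primrec.snd), fun a => hp (f a)⟩

theorem CEPredIn.and_primrecPred {p q : α → Prop} (hp : CEPredIn (oracleOf A) p)
    (hq : PrimrecPred q) : CEPredIn (oracleOf A) fun a => p a ∧ q a := by
  obtain ⟨R, hR, hp⟩ := cePredIn_oracleOf_iff.1 hp
  exact cePredIn_oracleOf_iff.2
    ⟨fun ζ a => R ζ a ∧ q a, PrimrecPred.and hR (hq.comp Primrec.snd), fun a => by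
      rw [hp, exists_and_right]⟩

open Encodable in
theorem CEPredIn.exists {p : α → β → Prop} (hp : CEPredIn (oracleOf A) fun q : α × β => p q.1 q.2) :
    CEPredIn (oracleOf A) fun a => ∃ b, p a b := by
  obtain ⟨R, hR, hp⟩ := cePredIn_oracleOf_iff.1 hp
  refine cePredIn_oracleOf_iff.2
    ⟨fun ζ a => ∃ q ∈ decode (α := β × ℕ) ζ.length, R (ζ.take q.2) (a, q.1), ?_, fun a => ?_⟩
  · refine primrecPred_exists_mem_option
      (R := fun (x : Str × α) (q : β × ℕ) => R (x.1.take q.2) (x.2, q.1)) (hR.comp ?_ ?_) ?_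
    · exact Primrec.list_take.comp (Primrec.snd.comp Primrec.snd) (Primrec.fst.comp Primrec.fst)
    · exact (Primrec.snd.comp Primrec.fst).pair (Primrec.fst.comp Primrec.snd)
    · exact Primrec.decode.comp (Primrec.list_length.comp Primrec.fst)
  · simp only [pre_length, take_pre]
    constructor
    · rintro ⟨b, hb⟩
      obtain ⟨k, hk⟩ := (hp (a, b)).1 hb
      have hle : k ≤ encode (b, k) := Nat.right_le_pair _ _
      exact ⟨encode (b, k), (b, k), encodek _, by rwa [min_eq_left hle]⟩
    · rintro ⟨l, ⟨b, k⟩, -, hk⟩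
      exact ⟨b, (hp (a, b)).2 ⟨_, hk⟩⟩

theorem cePred_exists {R : α → ℕ → Prop} (hR : PrimrecRel R) : CEPred fun a => ∃ s, R a s := by
  have hf : Partrec fun a => Nat.rfind fun s => Part.some (decide (R a s)) :=
    Partrec.rfind (Computable.partrec hR.decide.to_comp)
  refine REPred.of_eq (Partrec.dom_re hf) fun a => ?_
  exact rfind_some_dom.trans (by simp)

end CEPredIn

/-! ### Monotone string maps -/

/-- A map of strings that sends extensions to extensions. Such a `Φ` is a Turing functional given
by its action on finite oracles. -/
def PrefixMonotone (Φ : Str → Str) : Prop := ∀ ⦃ρ ρ'⦄, ρ <+: ρ' → Φ ρ <+: Φ ρ'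

/-- `Φ^Y = X`: the functional `Φ` outputs every bit of `X` from the oracle `Y`. -/
def Produces (Φ : Str → Str) (Y X : Seq) : Prop := ∀ n, ∃ k, pre X n <+: Φ (pre Y k)

theorem PrefixMonotone.id : PrefixMonotone id := fun _ _ h => h

theorem primrecRel_prefix : PrimrecRel fun σ τ : Str => σ <+: τ :=
  (Primrec.eq.comp Primrec.fst (Primrec.list_take.comp
    (Primrec.list_length.comp Primrec.fst) Primrec.snd)).of_eq fun _ =>
      List.prefix_iff_eq_take.symm

/-- The entries of a list that precede its first `none`. -/
def takeSome {α : Type*} : List (Option α) → List α :=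
  List.foldr (fun o l => o.elim [] (· :: l)) []

theorem primrec_takeSome {α : Type*} [Primcodable α] : Primrec (takeSome (α := α)) := by
  have hcons : Primrec₂ fun (p : List (Option α) × Option α × List α) (a : α) => a :: p.2.2 :=
    Primrec.list_cons.comp Primrec.snd (Primrec.snd.comp (Primrec.snd.comp Primrec.fst))
  have hstep : Primrec₂ fun (_ : List (Option α)) (p : Option α × List α) =>
      p.1.elim [] (· :: p.2) :=
    (Primrec.option_casesOn (Primrec.fst.comp Primrec.snd) (Primrec.const []) hcons).of_eq
      fun ⟨_, o, _⟩ => by cases o <;> rfl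
  exact Primrec.list_foldr Primrec.id (Primrec.const []) hstep

theorem prefix_takeSome_iff {α : Type*} {l : List α} {L : List (Option α)} :
    l <+: takeSome L ↔ ∀ (i : ℕ) (a : α), l[i]? = some a → L[i]? = some (some a) := by
  have map_some_prefix : l <+: takeSome L ↔ l.map some <+: L := by
    induction L generalizing l with
    | nil => simp [takeSome]
    | cons o L ih =>
      rcases l with _ | ⟨a, l⟩
      · simp
      · rcases o with _ | b
        · simp [takeSome, List.cons_prefix_cons]
        · simpa [takeSome, List.cons_prefix_cons] using fun _ => ih
  rw [map_some_prefix, List.prefix_iff_getElem?]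
  simp [List.getElem?_eq_some_iff]

/-- The bits that the approximation `G` has computed from `ρ`, up to the first missing one. -/
def outputBits (G : Str → ℕ → Option ℕ) (ρ : Str) : Str :=
  takeSome ((List.range ρ.length).map fun i => (G ρ i).map (· == 1))

theorem prefix_outputBits_iff {G : Str → ℕ → Option ℕ} {σ ρ : Str} :
    σ <+: outputBits G ρ ↔
      ∀ i b, σ[i]? = some b → i < ρ.length ∧ ∃ x ∈ G ρ i, (x == 1) = b := by
  simp [outputBits, prefix_takeSome_iff, List.getElem?_eq_some_iff (l := List.range _)]

section Approximates

variable {G : Str → ℕ → Option ℕ} {X Y : Seq}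

theorem Approximates.primrec_outputBits {f : ℕ →. ℕ} (hG : Approximates G Y f) :
    Primrec (outputBits G) :=
  primrec_takeSome.comp (Primrec.list_map (Primrec.list_range.comp Primrec.list_length)
    (Primrec.option_map hG.primrec (Primrec.beq.comp Primrec.snd (Primrec.const 1))))

theorem Approximates.prefixMonotone_outputBits {f : ℕ →. ℕ} (hG : Approximates G Y f) :
    PrefixMonotone (outputBits G) := by
  intro ρ ρ' h
  refine prefix_outputBits_iff.2 fun i b hb => ?_
  obtain ⟨hi, x, hx, hxb⟩ := prefix_outputBits_iff.1 List.prefix_rfl i b hb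
  exact ⟨hi.trans_le h.length_le, x, hG.mono h hx, hxb⟩

theorem Approximates.produces_outputBits (hG : Approximates G Y (oracleOf X)) :
    Produces (outputBits G) Y X := by
  intro n
  have hbits : ∀ᶠ k in atTop, ∀ i ∈ Set.Iio n, cond (X i) 1 0 ∈ G (pre Y k) i :=
    (eventually_all_finite (Set.finite_Iio n)).2 fun i _ => hG.eventually_mem (Part.mem_some _)
  obtain ⟨k, hk, hnk⟩ := (hbits.and (eventually_ge_atTop n)).exists
  refine ⟨k, prefix_outputBits_iff.2 fun i b hb => ?_⟩
  obtain ⟨hi, rfl⟩ := getElem?_pre_eq_some_iff.1 hb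
  refine ⟨?_, _, hk i hi, by cases X i <;> rfl⟩
  rw [pre_length]
  exact hi.trans_le hnk

end Approximates

theorem SeqTuringLE.exists_prefixMonotone {X Y : Seq} (h : SeqTuringLE X Y) :
    ∃ Φ, Primrec Φ ∧ PrefixMonotone Φ ∧ Produces Φ Y X :=
  have ⟨G, hG⟩ := RecIn.exists_approximates h
  ⟨outputBits G, hG.primrec_outputBits, hG.prefixMonotone_outputBits, hG.produces_outputBits⟩

/-! ### Preimages of cylinders -/

/-- The `A` such that `Φ` maps the first `s` bits of `A` to an extension of `σ`. -/
def preimageAt (Φ : Str → Str) (s : ℕ) (σ : Str) : Set Seq := {A | σ <+: Φ (pre A s)}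

/-- The preimage of the cylinder `[σ]` under the Turing functional `Φ`. -/
def preimage (Φ : Str → Str) (σ : Str) : Set Seq := ⋃ s, preimageAt Φ s σ

section preimage

variable {Φ : Str → Str} {σ τ : Str}

theorem mem_preimage {A : Seq} : A ∈ preimage Φ σ ↔ ∃ s, σ <+: Φ (pre A s) := Set.mem_iUnion

theorem preimage_id (σ : Str) : preimage id σ = cyl σ := by
  ext A
  exact mem_preimage.trans mem_cyl_iff_prefix.symm

theorem cyl_subset_cyl (h : σ <+: τ) : cyl τ ⊆ cyl σ := fun A hA => by
  obtain ⟨n, hn⟩ := mem_cyl_iff_prefix.1 hA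
  exact mem_cyl_iff_prefix.2 ⟨n, h.trans hn⟩

theorem mem_cyl_pre (A : Seq) (n : ℕ) : A ∈ cyl (pre A n) :=
  mem_cyl_iff_prefix.2 ⟨n, List.prefix_rfl⟩

theorem PrefixMonotone.monotone_preimageAt (hΦ : PrefixMonotone Φ) (σ : Str) :
    Monotone fun s => preimageAt Φ s σ :=
  fun _ _ hst A hA => List.IsPrefix.trans hA (hΦ (pre_prefix_pre A hst))

theorem PrefixFree.pairwiseDisjoint_preimage {S : Set Str} (hS : PrefixFree S)
    (hΦ : PrefixMonotone Φ) : S.PairwiseDisjoint (preimage Φ) := by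
  intro σ hσ τ hτ hne
  refine Set.disjoint_left.2 fun A hAσ hAτ => hne ?_
  obtain ⟨s, hs⟩ := Set.mem_iUnion.1 hAσ
  obtain ⟨t, ht⟩ := Set.mem_iUnion.1 hAτ
  rcases List.prefix_or_prefix_of_prefix
    (hΦ.monotone_preimageAt σ (le_max_left s t) hs)
    (hΦ.monotone_preimageAt τ (le_max_right s t) ht) with h | h
  · exact hS σ hσ τ hτ h
  · exact (hS τ hτ σ hσ h).symm

theorem measurableSet_pre_mem (n : ℕ) (S : Set Str) : MeasurableSet {A : Seq | pre A n ∈ S} := by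
  have hm : Measurable fun (A : Seq) (i : Fin n) => A i :=
    measurable_pi_lambda _ fun i => measurable_pi_apply _
  exact hm (t := {f | List.ofFn f ∈ S}) (Set.toFinite _).measurableSet

theorem measurableSet_cyl (σ : Str) : MeasurableSet (cyl σ) := measurableSet_pre_mem σ.length {σ}

theorem measurableSet_preimage (Φ : Str → Str) (σ : Str) : MeasurableSet (preimage Φ σ) :=
  .iUnion fun s => measurableSet_pre_mem s {ρ | σ <+: Φ ρ}

end preimage

/-- The strings in `S` without proper initial segments in `S`. -/
def minimals (S : Set Str) : Set Str := {σ ∈ S | ∀ τ ∈ S, τ <+: σ → τ = σ}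

theorem prefixFree_minimals (S : Set Str) : PrefixFree (minimals S) :=
  fun σ hσ _ hτ => hτ.2 σ hσ.1

theorem exists_prefix_mem_minimals {S : Set Str} {σ : Str} (hσ : σ ∈ S) :
    ∃ τ ∈ minimals S, τ <+: σ := by
  obtain ⟨τ, ⟨hτS, hτσ⟩, hmin⟩ :=
    (measure List.length).wf.has_min {τ | τ ∈ S ∧ τ <+: σ} ⟨σ, hσ, List.prefix_rfl⟩
  refine ⟨τ, ⟨hτS, fun ρ hρ hρτ => hρτ.eq_of_length_le ?_⟩, hτσ⟩
  exact not_lt.1 (hmin ρ ⟨hρ, hρτ.trans hτσ⟩)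

theorem measure_biUnion_le_mul_preimage {μ : Measure Seq} {Φ : Str → Str} (hΦ : PrefixMonotone Φ)
    {f : Str → Set Seq} (hf : ∀ {σ τ}, σ <+: τ → f τ ⊆ f σ) {S : Set Str} {a : ℝ≥0∞}
    (h : ∀ σ ∈ S, μ (f σ) ≤ a * μ (preimage Φ σ)) :
    μ (⋃ σ ∈ S, f σ) ≤ a * μ (⋃ σ ∈ S, preimage Φ σ) :=
  calc μ (⋃ σ ∈ S, f σ) ≤ μ (⋃ σ ∈ minimals S, f σ) := by
        refine measure_mono (Set.iUnion₂_subset fun σ hσ => ?_)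
        obtain ⟨τ, hτ, hτσ⟩ := exists_prefix_mem_minimals hσ
        exact (hf hτσ).trans (Set.subset_biUnion_of_mem hτ)
    _ ≤ ∑' σ : minimals S, μ (f σ) := measure_biUnion_le μ (Set.to_countable _) _
    _ ≤ ∑' σ : minimals S, a * μ (preimage Φ σ) := ENNReal.tsum_le_tsum fun σ => h σ σ.2.1
    _ = a * ∑' σ : minimals S, μ (preimage Φ σ) := ENNReal.tsum_mul_left
    _ = a * μ (⋃ σ ∈ minimals S, preimage Φ σ) := by
        rw [measure_biUnion (Set.to_countable _)
          ((prefixFree_minimals S).pairwiseDisjoint_preimage hΦ)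
          fun σ _ => measurableSet_preimage Φ σ]
    _ ≤ a * μ (⋃ σ ∈ S, preimage Φ σ) := by
        gcongr _ * μ ?_
        exact Set.biUnion_subset_biUnion_left fun σ (hσ : σ ∈ minimals S) => hσ.1

/-! ### The measure of a preimage -/

theorem inv_two_pow_mul_two_pow (n : ℕ) : (2⁻¹ : ℝ≥0∞) ^ n * 2 ^ n = 1 := by
  rw [← mul_pow, ENNReal.inv_mul_cancel (by simp) (by simp), one_pow]

/-- The list of all binary strings of length `n`. -/
def strs (n : ℕ) : List Str :=
  n.rec [[]] fun _ L => L.flatMap fun σ => [false :: σ, true :: σ]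

theorem strs_succ (n : ℕ) : strs (n + 1) = (strs n).flatMap fun σ => [false :: σ, true :: σ] := rfl

theorem primrec_strs : Primrec strs := by
  refine Primrec.nat_rec₁ _ (Primrec.list_flatMap Primrec.snd ?_)
  have hcons (b : Bool) : Primrec fun p : (ℕ × List Str) × Str => b :: p.2 :=
    Primrec.list_cons.comp (Primrec.const b) Primrec.snd
  exact Primrec.list_cons.comp (hcons false)
    (Primrec.list_cons.comp (hcons true) (Primrec.const []))

theorem mem_strs {n : ℕ} {σ : Str} : σ ∈ strs n ↔ σ.length = n := by
  induction n generalizing σ with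
  | zero => simp [strs]
  | succ n ih =>
    rw [strs_succ]
    cases σ with
    | nil => simp
    | cons b σ => cases b <;> simp [ih]

theorem nodup_strs (n : ℕ) : (strs n).Nodup := by
  induction n with
  | zero => simp [strs]
  | succ n ih =>
    rw [strs_succ, List.nodup_flatMap]
    refine ⟨fun σ _ => by simp, ih.imp fun {σ τ} h => ?_⟩
    simp [Function.onFun, Ne.symm h]

/-- The number of strings of length `s` that `Φ` maps to an extension of `σ`. -/
noncomputable def preimageCount (Φ : Str → Str) (s : ℕ) (σ : Str) : ℕ :=
  ((strs s).filter fun ρ => σ <+: Φ ρ).length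

/-- The preimage of `[σ]` at stage `s` has measure more than `2^{c-|σ|}`; see
`FairCoin.heavy_iff`. Clearing denominators makes the condition primitive recursive. -/
def Heavy (Φ : Str → Str) (c s : ℕ) (σ : Str) : Prop :=
  2 ^ s * 2 ^ c < preimageCount Φ s σ * 2 ^ σ.length

theorem primrec_two_pow : Primrec fun n : ℕ => 2 ^ n :=
  (Primrec.nat_rec₁ 1 (f := fun _ x => x * 2)
    (Primrec.nat_mul.comp Primrec.snd (Primrec.const 2))).of_eq fun n => by
      induction n with
      | zero => rfl
      | succ n ih => rw [pow_succ, ← ih]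

theorem primrecPred_heavy {Φ : Str → Str} (hΦ : Primrec Φ) :
    PrimrecPred fun p : ℕ × ℕ × Str => Heavy Φ p.1 p.2.1 p.2.2 := by
  have hs : Primrec fun p : ℕ × ℕ × Str => p.2.1 := Primrec.fst.comp Primrec.snd
  have hσ : Primrec fun p : ℕ × ℕ × Str => p.2.2 := Primrec.snd.comp Primrec.snd
  have hprefix : PrimrecRel fun ρ σ : Str => σ <+: Φ ρ :=
    primrecRel_prefix.comp Primrec.snd (hΦ.comp Primrec.fst)
  have hcount : Primrec fun p : ℕ × ℕ × Str => preimageCount Φ p.2.1 p.2.2 :=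
    Primrec.list_length.comp (hprefix.listFilter.comp (primrec_strs.comp hs) hσ)
  exact Primrec.nat_lt.comp
    (Primrec.nat_mul.comp (primrec_two_pow.comp hs) (primrec_two_pow.comp Primrec.fst))
    (Primrec.nat_mul.comp hcount (primrec_two_pow.comp (Primrec.list_length.comp hσ)))

section FairCoin

variable {μ : Measure Seq} {Φ : Str → Str}

theorem FairCoin.measure_univ (hμ : FairCoin μ) : μ Set.univ = 1 := by
  have : cyl [] = Set.univ := Set.eq_univ_of_forall fun A => mem_cyl_pre A 0
  simpa [this] using hμ []

theorem FairCoin.measure_preimageAt (hμ : FairCoin μ) (Φ : Str → Str) (s : ℕ) (σ : Str) :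
    μ (preimageAt Φ s σ) = preimageCount Φ s σ * 2⁻¹ ^ s := by
  set L := (strs s).filter fun ρ => σ <+: Φ ρ with hL
  have mem_L {ρ : Str} : ρ ∈ L.toFinset ↔ ρ.length = s ∧ σ <+: Φ ρ := by
    simp [hL, mem_strs]
  have heq : preimageAt Φ s σ = ⋃ ρ ∈ L.toFinset, cyl ρ := by
    ext A
    simp only [Set.mem_iUnion, mem_L, exists_prop]
    constructor
    · exact fun h => ⟨pre A s, ⟨pre_length A s, h⟩, mem_cyl_pre A s⟩
    · rintro ⟨ρ, ⟨rfl, h⟩, hA : pre A ρ.length = ρ⟩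
      rwa [← hA] at h
  have hdisj : (L.toFinset : Set Str).PairwiseDisjoint cyl := by
    intro ρ hρ ρ' hρ' hne
    refine Set.disjoint_left.2 fun A hA hA' => hne ?_
    rw [← show pre A ρ.length = ρ from hA, ← show pre A ρ'.length = ρ' from hA',
      (mem_L.1 hρ).1, (mem_L.1 hρ').1]
  calc μ (preimageAt Φ s σ) = ∑ ρ ∈ L.toFinset, μ (cyl ρ) := by
        rw [heq, measure_biUnion_finset hdisj fun ρ _ => measurableSet_cyl ρ]
    _ = ∑ ρ ∈ L.toFinset, 2⁻¹ ^ s :=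
        Finset.sum_congr rfl fun ρ hρ => by rw [hμ, (mem_L.1 hρ).1]
    _ = preimageCount Φ s σ * 2⁻¹ ^ s := by
        rw [Finset.sum_const, List.toFinset_card_of_nodup ((nodup_strs s).filter _), nsmul_eq_mul]
        rfl

theorem FairCoin.heavy_iff (hμ : FairCoin μ) {c s : ℕ} {σ : Str} :
    Heavy Φ c s σ ↔ 2 ^ c * μ (cyl σ) < μ (preimageAt Φ s σ) := by
  have hscale : StrictMono fun x : ℝ≥0∞ => x * (2 ^ s * 2 ^ σ.length) :=
    ENNReal.mul_left_strictMono (by simp) (by finiteness)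
  have hcyl : 2 ^ c * μ (cyl σ) * (2 ^ s * 2 ^ σ.length) = (2 ^ s * 2 ^ c : ℕ) := by
    calc 2 ^ c * μ (cyl σ) * (2 ^ s * 2 ^ σ.length)
        = 2 ^ s * 2 ^ c * (2⁻¹ ^ σ.length * 2 ^ σ.length) := by rw [hμ]; ring
      _ = (2 ^ s * 2 ^ c : ℕ) := by rw [inv_two_pow_mul_two_pow, mul_one]; norm_cast
  have hpreimage : μ (preimageAt Φ s σ) * (2 ^ s * 2 ^ σ.length) =
      (preimageCount Φ s σ * 2 ^ σ.length : ℕ) := by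
    calc μ (preimageAt Φ s σ) * (2 ^ s * 2 ^ σ.length)
        = preimageCount Φ s σ * 2 ^ σ.length * (2⁻¹ ^ s * 2 ^ s) := by
          rw [hμ.measure_preimageAt]; ring
      _ = (preimageCount Φ s σ * 2 ^ σ.length : ℕ) := by
          rw [inv_two_pow_mul_two_pow, mul_one]; norm_cast
  rw [← hscale.lt_iff_lt]
  simp only [hcyl, hpreimage, Nat.cast_lt, Heavy]

theorem MLRandom.exists_not_heavy {X : Seq} (hX : MLRandom μ X) (hμ : FairCoin μ)
    (hΦ : Primrec Φ) (hmono : PrefixMonotone Φ) :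
    ∃ c, ∀ s σ, X ∈ cyl σ → ¬ Heavy Φ c s σ := by
  let S (c : ℕ) : Set Str := {σ | ∃ s, Heavy Φ c s σ}
  have hce : CEPred fun p : ℕ × Str => p.2 ∈ S p.1 :=
    cePred_exists (R := fun (p : ℕ × Str) s => Heavy Φ p.1 s p.2) <| (primrecPred_heavy hΦ).comp <|
      (Primrec.fst.comp Primrec.fst).pair (Primrec.snd.pair (Primrec.snd.comp Primrec.fst))
  have hcyl {c : ℕ} {σ : Str} (hσ : σ ∈ S c) : μ (cyl σ) ≤ 2⁻¹ ^ c * μ (preimage Φ σ) := by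
    obtain ⟨s, hs⟩ := hσ
    calc μ (cyl σ) = 2⁻¹ ^ c * (2 ^ c * μ (cyl σ)) := by
          rw [← mul_assoc, inv_two_pow_mul_two_pow, one_mul]
      _ ≤ 2⁻¹ ^ c * μ (preimageAt Φ s σ) := by gcongr; exact (hμ.heavy_iff.1 hs).le
      _ ≤ 2⁻¹ ^ c * μ (preimage Φ σ) := by gcongr; exact Set.subset_iUnion (preimageAt Φ · σ) s
  have htest : MLTest μ fun c => ⋃ σ ∈ S c, cyl σ := by
    refine ⟨{p | p.2 ∈ S p.1}, hce, fun _ => rfl, fun c => ?_⟩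
    calc μ (⋃ σ ∈ S c, cyl σ) ≤ 2⁻¹ ^ c * μ (⋃ σ ∈ S c, preimage Φ σ) :=
          measure_biUnion_le_mul_preimage hmono cyl_subset_cyl fun _ => hcyl
      _ ≤ 2⁻¹ ^ c * μ Set.univ := by gcongr; exact Set.subset_univ _
      _ = 2⁻¹ ^ c := by rw [hμ.measure_univ, mul_one]
  obtain ⟨c, hc⟩ := not_forall.1 (mt Set.mem_iInter.2 (hX _ htest))
  exact ⟨c, fun s σ hσ hs => hc (Set.mem_biUnion (x := σ) ⟨s, hs⟩ hσ)⟩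

/-! ### Pulling back relativized tests -/

/-- No initial segment of `σ`, including `σ` itself, is heavy at stage `s`. -/
def Light (Φ : Str → Str) (c s : ℕ) (σ : Str) : Prop := ∀ τ, τ <+: σ → ¬ Heavy Φ c s τ

theorem primrecRel_light (hΦ : Primrec Φ) (c : ℕ) : PrimrecRel (Light Φ c) := by
  have hnot : PrimrecRel fun (n : ℕ) (p : ℕ × Str) => ¬ Heavy Φ c p.1 (p.2.take n) :=
    ((primrecPred_heavy hΦ).comp (f := fun q : ℕ × ℕ × Str => (c, q.2.1, q.2.2.take q.1)) <|
      (Primrec.const c).pair ((Primrec.fst.comp Primrec.snd).pair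
        (Primrec.list_take.comp Primrec.fst (Primrec.snd.comp Primrec.snd)))).not
  refine ((primrecRel_forall_lt hnot).comp (Primrec.succ.comp (Primrec.list_length.comp
    Primrec.snd)) Primrec.id).of_eq fun ⟨s, σ⟩ => ⟨fun h τ hτ => ?_, fun h n _ => ?_⟩
  · rw [List.prefix_iff_eq_take.1 hτ]
    exact h _ (Nat.lt_succ_of_le hτ.length_le)
  · exact h _ (List.take_prefix n σ)

/-- The part of the preimage of `[σ]` that is found while `σ` is light. Since lightness is passed
to initial segments, this shrinks as `σ` is extended. -/
def cappedPreimage (Φ : Str → Str) (c : ℕ) (σ : Str) : Set Seq :=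
  ⋃ s ∈ {s | Light Φ c s σ}, preimageAt Φ s σ

theorem cappedPreimage_subset {c : ℕ} {σ τ : Str} (h : σ <+: τ) :
    cappedPreimage Φ c τ ⊆ cappedPreimage Φ c σ :=
  Set.biUnion_mono (fun _ hs ρ hρ => hs ρ (hρ.trans h)) fun _ _ _ hA => h.trans hA

theorem FairCoin.measure_cappedPreimage_le (hμ : FairCoin μ) (hmono : PrefixMonotone Φ) (c : ℕ)
    (σ : Str) : μ (cappedPreimage Φ c σ) ≤ 2 ^ c * μ (cyl σ) := by
  have hdir : DirectedOn ((fun s => preimageAt Φ s σ) ⁻¹'o (· ⊆ ·)) {s | Light Φ c s σ} :=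
    fun s hs t ht => ⟨max s t, max_rec' (· ∈ {s | Light Φ c s σ}) hs ht,
      hmono.monotone_preimageAt σ (le_max_left s t), hmono.monotone_preimageAt σ (le_max_right s t)⟩
  rw [cappedPreimage, measure_biUnion_eq_iSup (Set.to_countable _) hdir]
  exact iSup₂_le fun s hs => not_lt.1 (mt hμ.heavy_iff.2 (hs σ List.prefix_rfl))

theorem FairCoin.measure_biUnion_cappedPreimage_le (hμ : FairCoin μ) (hmono : PrefixMonotone Φ)
    (c : ℕ) (S : Set Str) :
    μ (⋃ σ ∈ S, cappedPreimage Φ c σ) ≤ 2 ^ c * μ (⋃ σ ∈ S, cyl σ) := by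
  simp only [← preimage_id]
  refine measure_biUnion_le_mul_preimage .id cappedPreimage_subset fun σ _ => ?_
  rw [preimage_id]
  exact hμ.measure_cappedPreimage_le hmono c σ

theorem biUnion_cyl_eq_biUnion_cappedPreimage (Φ : Str → Str) (c : ℕ) (S : Set Str) :
    ⋃ ρ ∈ {ρ | ∃ σ, σ ∈ S ∧ Light Φ c ρ.length σ ∧ σ <+: Φ ρ}, cyl ρ =
      ⋃ σ ∈ S, cappedPreimage Φ c σ := by
  ext A
  simp only [cappedPreimage, preimageAt, Set.mem_iUnion, Set.mem_ofPred_eq, exists_prop]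
  constructor
  · rintro ⟨ρ, ⟨σ, hσ, hlight, hρ⟩, hA : pre A ρ.length = ρ⟩
    exact ⟨σ, hσ, ρ.length, hlight, by rwa [hA]⟩
  · rintro ⟨σ, hσ, s, hlight, hA⟩
    exact ⟨pre A s, ⟨σ, hσ, (pre_length A s).symm ▸ hlight, hA⟩, mem_cyl_pre A s⟩

theorem Produces.mem_cappedPreimage {X Y : Seq} (h : Produces Φ Y X) {c : ℕ}
    (hc : ∀ s σ, X ∈ cyl σ → ¬ Heavy Φ c s σ) {σ : Str} (hσ : X ∈ cyl σ) :
    Y ∈ cappedPreimage Φ c σ := by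
  obtain ⟨n, hn⟩ := mem_cyl_iff_prefix.1 hσ
  obtain ⟨k, hk⟩ := h n
  exact Set.mem_biUnion (fun τ hτ => hc k τ (cyl_subset_cyl hτ hσ)) (hn.trans hk)

theorem MLTestIn.exists_pullback {Z : Seq} {U : ℕ → Set Seq} (hU : MLTestIn (oracleOf Z) μ U)
    (hμ : FairCoin μ) (hΦ : Primrec Φ) (hmono : PrefixMonotone Φ) (c : ℕ) :
    ∃ V, MLTestIn (oracleOf Z) μ V ∧ ∀ X Y, Produces Φ Y X →
      (∀ s σ, X ∈ cyl σ → ¬ Heavy Φ c s σ) → X ∈ ⋂ i, U i → Y ∈ ⋂ i, V i := by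
  obtain ⟨W, hW, hUW, hUμ⟩ := hU
  let S (i : ℕ) : Set Str := {σ | (i + c, σ) ∈ W}
  have hWc : CEPredIn (oracleOf Z) fun q : (ℕ × Str) × Str => q.2 ∈ S q.1.1 :=
    hW.comp ((Primrec.nat_add.comp (Primrec.fst.comp Primrec.fst) (Primrec.const c)).pair
      Primrec.snd)
  have hcap : PrimrecPred fun q : (ℕ × Str) × Str =>
      Light Φ c q.1.2.length q.2 ∧ q.2 <+: Φ q.1.2 := by
    have hρ : Primrec fun q : (ℕ × Str) × Str => q.1.2 := Primrec.snd.comp Primrec.fst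
    exact ((primrecRel_light hΦ c).comp (Primrec.list_length.comp hρ) Primrec.snd).and
      (primrecRel_prefix.comp Primrec.snd (hΦ.comp hρ))
  let W' : Set (ℕ × Str) := {p | ∃ σ, σ ∈ S p.1 ∧ Light Φ c p.2.length σ ∧ σ <+: Φ p.2}
  have hW' : CEPredIn (oracleOf Z) (· ∈ W') := (hWc.and_primrecPred hcap).exists
    (p := fun (p : ℕ × Str) σ => σ ∈ S p.1 ∧ Light Φ c p.2.length σ ∧ σ <+: Φ p.2)
  refine ⟨fun i => ⋃ σ ∈ S i, cappedPreimage Φ c σ,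
    ⟨W', hW', fun i => (biUnion_cyl_eq_biUnion_cappedPreimage Φ c (S i)).symm, fun i => ?_⟩,
    fun X Y hXY hX hXU => Set.mem_iInter.2 fun i => ?_⟩
  · calc μ (⋃ σ ∈ S i, cappedPreimage Φ c σ) ≤ 2 ^ c * μ (⋃ σ ∈ S i, cyl σ) :=
          hμ.measure_biUnion_cappedPreimage_le hmono c (S i)
      _ ≤ 2 ^ c * 2⁻¹ ^ (i + c) := by gcongr; exact hUW (i + c) ▸ hUμ (i + c)
      _ = 2⁻¹ ^ i * (2⁻¹ ^ c * 2 ^ c) := by ring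
      _ = 2⁻¹ ^ i := by rw [inv_two_pow_mul_two_pow, mul_one]
  · obtain ⟨σ, hσ, hXσ⟩ := Set.mem_iUnion₂.1 (hUW (i + c) ▸ Set.mem_iInter.1 hXU (i + c))
    exact Set.mem_biUnion hσ (hXY.mem_cappedPreimage hX hXσ)

end FairCoin

/-- **The XYZ theorem** (Miller–Yu): if `X` is Martin-Löf random, `X ≤_T Y`, and `Y`
is Martin-Löf random relative to `Z`, then `X` is Martin-Löf random relative to `Z`. -/
theorem xyz_theorem (μ : MeasureTheory.Measure Seq) (hμ : FairCoin μ)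
    (X Y Z : Seq) (hX : MLRandom μ X) (hXY : SeqTuringLE X Y)
    (hY : MLRandomIn (oracleOf Z) μ Y) :
    MLRandomIn (oracleOf Z) μ X := by
  obtain ⟨Φ, hΦ, hmono, hΦXY⟩ := hXY.exists_prefixMonotone
  obtain ⟨c, hc⟩ := hX.exists_not_heavy hμ hΦ hmono
  intro U hU hXU
  obtain ⟨V, hV, hUV⟩ := hU.exists_pullback hμ hΦ hmono c
  exact hY V hV (hUV X Y hΦXY hc hXU)

end AR
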